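/- arXiv:2403.02187 — 2 statements merged into one kernel-verified Lean document; each statement's English description precedes it below -/
import Mathlib

section
/- Let q_N be a sequence of joint probability densities on the space of (ξ, η) such that D_KL(p_{ξ,η} ‖ q_N) → 0 as N → ∞, where (ξ, η) is an absolutely continuous pair of random vectors with joint density p_{ξ,η}. Then I_{q_N}(ξ; η) → I(ξ; η) as N → ∞, where I_{q_N}(ξ; η) = E_{(ξ,η)∼p_{ξ,η}}[log(q_N(ξ, η)/((q_N)_ξ(ξ) (q_N)_η(η)))] and (q_N)_ξ, (q_N)_η are the marginals of q_N. -/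
open MeasureTheory Real Filter

/-!
On the support of `p`, `log` splits so that `I(ξ; η) - I_q(ξ; η) = D - D_X - D_Y`, where
`D = D_KL(p ‖ q)` and `D_X`, `D_Y` are the divergences of the marginals. Gibbs' inequality gives
`0 ≤ D_X, D_Y`, and the chain rule for relative entropy gives `D_X, D_Y ≤ D`
(`marginal_kl_bounds`). Hence `|I - I_q| ≤ D`, and `D → 0` finishes the proof.

Both inequalities come from `log t ≥ 1 - 1/t`; the error terms are integrals of a joint density
reweighted so that its first marginal becomes another density (`integral_reweight_le`).
-/

/-- Reweighting `f` by `g / F`, where `F` is its first marginal, produces a function with first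
marginal `g` on `{F ≠ 0}` and `0` elsewhere, so its total mass is at most that of `g`. -/
lemma integral_reweight_le {α β : Type*} [MeasurableSpace α] [MeasurableSpace β]
    {μ : Measure α} {ν : Measure β} [SFinite μ] [SFinite ν]
    {f : α × β → ℝ} (hfm : Measurable f) (hf0 : ∀ z, 0 ≤ f z) (hf : Integrable f (μ.prod ν))
    {F g : α → ℝ} (hF : ∀ x, F x = ∫ y, f (x, y) ∂ν)
    (hgm : Measurable g) (hg0 : ∀ x, 0 ≤ g x) (hg : Integrable g μ) :
    Integrable (fun z => f z * (g z.1 / F z.1)) (μ.prod ν) ∧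
      ∫ z, f z * (g z.1 / F z.1) ∂(μ.prod ν) ≤ ∫ x, g x ∂μ := by
  have hFm : Measurable F := by
    rw [funext hF]
    exact (hfm.stronglyMeasurable.integral_prod_right').measurable
  have hF0 : ∀ x, 0 ≤ F x := fun x => by
    rw [hF]; exact integral_nonneg fun y => hf0 _
  have hin : ∀ x, ∫ y, f (x, y) * (g x / F x) ∂ν = F x * (g x / F x) := fun x => by
    rw [integral_mul_const, ← hF]
  have hle : ∀ x, F x * (g x / F x) ≤ g x := fun x => by
    rcases (hF0 x).eq_or_lt with h | h
    · rw [← h]; simpa using hg0 x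
    · rw [mul_div_cancel₀ _ h.ne']
  have h0 : ∀ x, 0 ≤ F x * (g x / F x) := fun x =>
    mul_nonneg (hF0 x) (div_nonneg (hg0 x) (hF0 x))
  have hm : Measurable fun z : α × β => f z * (g z.1 / F z.1) := by fun_prop
  have hI : Integrable (fun x => F x * (g x / F x)) μ := by
    refine hg.mono' (by fun_prop) (ae_of_all _ fun x => ?_)
    rw [Real.norm_of_nonneg (h0 x)]
    exact hle x
  have hint : Integrable (fun z => f z * (g z.1 / F z.1)) (μ.prod ν) := by
    rw [integrable_prod_iff hm.aestronglyMeasurable]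
    refine ⟨?_, ?_⟩
    · filter_upwards [hf.prod_right_ae] with x hx
      exact hx.mul_const _
    · convert hI using 2 with x
      rw [← hin]
      refine integral_congr_ae (ae_of_all _ fun y => ?_)
      exact Real.norm_of_nonneg (mul_nonneg (hf0 _) (div_nonneg (hg0 x) (hF0 x)))
  refine ⟨hint, ?_⟩
  rw [integral_prod _ hint]
  simp only [hin]
  exact integral_mono hI hg hle

lemma ae_marginal_pos {α β : Type*} [MeasurableSpace α] [MeasurableSpace β]
    {μ : Measure α} {ν : Measure β} [SFinite μ] [SFinite ν] [NeZero ν]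
    {q : α × β → ℝ} (hq0 : ∀ z, 0 < q z) (hq : Integrable q (μ.prod ν))
    {qX : α → ℝ} (hqX : ∀ x, qX x = ∫ y, q (x, y) ∂ν) :
    ∀ᵐ z ∂(μ.prod ν), 0 < qX z.1 := by
  refine Measure.quasiMeasurePreserving_fst.ae (p := fun x => 0 < qX x) ?_
  filter_upwards [hq.prod_right_ae] with x hx
  rw [hqX, integral_pos_iff_support_of_nonneg (fun y => (hq0 _).le) hx]
  have : Function.support (fun y => q (x, y)) = Set.univ :=
    Set.eq_univ_of_forall fun y => (hq0 _).ne'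
  rw [this]
  exact NeZero.pos _

/-- The divergence of the first marginals is nonnegative (Gibbs) and at most the divergence of
the joint densities (data processing). -/
lemma marginal_kl_bounds {α β : Type*} [MeasurableSpace α] [MeasurableSpace β]
    {μ : Measure α} {ν : Measure β} [SFinite μ] [SFinite ν] [NeZero ν]
    {p q : α × β → ℝ} (hpm : Measurable p) (hp0 : ∀ z, 0 ≤ p z)
    (hp1 : ∫ z, p z ∂(μ.prod ν) = 1)
    {pX qX : α → ℝ} (hpX : ∀ x, pX x = ∫ y, p (x, y) ∂ν)
    (hsupp : ∀ᵐ z ∂(μ.prod ν), 0 < p z → 0 < pX z.1)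
    (hqm : Measurable q) (hq0 : ∀ z, 0 < q z)
    (hq1 : ∫ z, q z ∂(μ.prod ν) = 1) (hqX : ∀ x, qX x = ∫ y, q (x, y) ∂ν)
    (hKL : Integrable (fun z => p z * log (p z / q z)) (μ.prod ν))
    (hKLX : Integrable (fun z => p z * log (pX z.1 / qX z.1)) (μ.prod ν)) :
    0 ≤ ∫ z, p z * log (pX z.1 / qX z.1) ∂(μ.prod ν) ∧
      ∫ z, p z * log (pX z.1 / qX z.1) ∂(μ.prod ν) ≤
        ∫ z, p z * log (p z / q z) ∂(μ.prod ν) := by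
  have hp : Integrable p (μ.prod ν) := .of_integral_ne_zero (by simp [hp1])
  have hq : Integrable q (μ.prod ν) := .of_integral_ne_zero (by simp [hq1])
  have hqXpos := ae_marginal_pos hq0 hq hqX
  have hpXm : Measurable pX := by
    rw [funext hpX]
    exact (hpm.stronglyMeasurable.integral_prod_right').measurable
  have hqXm : Measurable qX := by
    rw [funext hqX]
    exact (hqm.stronglyMeasurable.integral_prod_right').measurable
  have hpX1 : ∫ x, pX x ∂μ = 1 := by
    rw [← hp1, integral_prod _ hp]; simp only [hpX]
  have hqX1 : ∫ x, qX x ∂μ = 1 := by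
    rw [← hq1, integral_prod _ hq]; simp only [hqX]
  obtain ⟨hi1, hl1⟩ := integral_reweight_le hpm hp0 hp hpX hqXm
    (fun x => by rw [hqX]; exact integral_nonneg fun y => (hq0 _).le)
    (.of_integral_ne_zero (by simp [hqX1]))
  have hpX0 : ∀ x, 0 ≤ pX x := fun x => by rw [hpX]; exact integral_nonneg fun y => hp0 _
  obtain ⟨hi2, hl2⟩ := integral_reweight_le hqm (fun z => (hq0 z).le) hq hqX hpXm hpX0
    (.of_integral_ne_zero (by simp [hpX1]))
  constructor
  · have h : ∫ z, (p z - p z * (qX z.1 / pX z.1)) ∂(μ.prod ν) ≤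
        ∫ z, p z * log (pX z.1 / qX z.1) ∂(μ.prod ν) := by
      refine integral_mono_ae (hp.sub hi1) hKLX ?_
      filter_upwards [hsupp, hqXpos] with z hz hqz
      rcases (hp0 z).eq_or_lt with h | h
      · simp [← h]
      · have := one_sub_inv_le_log_of_pos (div_pos (hz h) hqz)
        rw [inv_div] at this
        nlinarith
    rw [integral_sub hp hi1] at h
    linarith
  · have h : ∫ z, (p z - q z * (pX z.1 / qX z.1)) ∂(μ.prod ν) ≤
        ∫ z, (p z * log (p z / q z) - p z * log (pX z.1 / qX z.1)) ∂(μ.prod ν) := by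
      refine integral_mono_ae (hp.sub hi2) (hKL.sub hKLX) ?_
      filter_upwards [hsupp, hqXpos] with z hz hqz
      rcases (hp0 z).eq_or_lt with h | h
      · have : 0 ≤ q z * (pX z.1 / qX z.1) :=
          mul_nonneg (hq0 z).le (div_nonneg (hpX0 _) hqz.le)
        simpa [← h] using this
      · have hpz := hz h
        have hqq := hq0 z
        have h1 := one_sub_inv_le_log_of_pos (div_pos (div_pos h hqq) (div_pos hpz hqz))
        rw [log_div (div_pos h hqq).ne' (div_pos hpz hqz).ne'] at h1
        have h2 := mul_le_mul_of_nonneg_left h1 h.le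
        have h3 : p z * (1 - (p z / q z / (pX z.1 / qX z.1))⁻¹) =
            p z - q z * (pX z.1 / qX z.1) := by
          field_simp
        rw [h3, mul_sub] at h2
        exact h2
    rw [integral_sub hp hi2, integral_sub hKL hKLX] at h
    linarith

/-- Let `q N` be a sequence of joint probability densities on the space
of `(ξ, η)` such that `D_KL(p ‖ q N) → 0` as `N → ∞`, where `(ξ, η)` is an absolutely
continuous pair of random vectors with joint density `p` (marginals `pX`, `pY`).  Then
`I_{q N}(ξ; η) → I(ξ; η)` as `N → ∞`, where
`I_{q N}(ξ; η) = E_p[log (q N (ξ,η) / (qX N ξ * qY N η))]` and `qX N`, `qY N` are the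
marginals of `q N`. -/
theorem proposal_mutual_information_tendsto
    (n m : ℕ)
    -- joint density p of (ξ, η) and its marginals
    (p : (Fin n → ℝ) × (Fin m → ℝ) → ℝ)
    (hp_meas : Measurable p)
    (hp_nonneg : ∀ z, 0 ≤ p z)
    (hp_int : ∫ z, p z = 1)
    (pX : (Fin n → ℝ) → ℝ) (hpX : ∀ x, pX x = ∫ y, p (x, y))
    (pY : (Fin m → ℝ) → ℝ) (hpY : ∀ y, pY y = ∫ x, p (x, y))
    -- on the support of p the marginal densities of p are positive (holds a.e.)
    (hp_supp : ∀ᵐ z : (Fin n → ℝ) × (Fin m → ℝ) ∂volume,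
      0 < p z → 0 < pX z.1 ∧ 0 < pY z.2)
    -- the sequence of proposal densities q N and their marginals
    (q : ℕ → (Fin n → ℝ) × (Fin m → ℝ) → ℝ)
    (hq_meas : ∀ N, Measurable (q N))
    (hq_pos : ∀ N z, 0 < q N z)
    (hq_int : ∀ N, ∫ z, q N z = 1)
    (qX : ℕ → (Fin n → ℝ) → ℝ) (hqX : ∀ N x, qX N x = ∫ y, q N (x, y))
    (qY : ℕ → (Fin m → ℝ) → ℝ) (hqY : ∀ N y, qY N y = ∫ x, q N (x, y))
    -- integrability of all the integrands involved
    (h_int_I : Integrable fun z : (Fin n → ℝ) × (Fin m → ℝ) =>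
      p z * Real.log (p z / (pX z.1 * pY z.2)))
    (h_int_Iq : ∀ N, Integrable fun z : (Fin n → ℝ) × (Fin m → ℝ) =>
      p z * Real.log (q N z / (qX N z.1 * qY N z.2)))
    (h_int_KL : ∀ N, Integrable fun z : (Fin n → ℝ) × (Fin m → ℝ) =>
      p z * Real.log (p z / q N z))
    (h_int_mX : ∀ N, Integrable fun z : (Fin n → ℝ) × (Fin m → ℝ) =>
      p z * Real.log (pX z.1 / qX N z.1))
    (h_int_mY : ∀ N, Integrable fun z : (Fin n → ℝ) × (Fin m → ℝ) =>
      p z * Real.log (pY z.2 / qY N z.2))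
    -- D_KL(p ‖ q N) → 0
    (h_KL_tendsto : Tendsto
      (fun N => ∫ z : (Fin n → ℝ) × (Fin m → ℝ), p z * Real.log (p z / q N z))
      atTop (nhds 0)) :
    -- I_{q N}(ξ; η) → I(ξ; η)
    Tendsto
      (fun N => ∫ z : (Fin n → ℝ) × (Fin m → ℝ),
        p z * Real.log (q N z / (qX N z.1 * qY N z.2)))
      atTop
      (nhds (∫ z : (Fin n → ℝ) × (Fin m → ℝ),
        p z * Real.log (p z / (pX z.1 * pY z.2)))) := by
  have hX := fun N => marginal_kl_bounds (μ := volume) (ν := volume) hp_meas hp_nonneg hp_int hpX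
    (hp_supp.mono fun z h hz => (h hz).1) (hq_meas N) (hq_pos N) (hq_int N) (hqX N)
    (h_int_KL N) (h_int_mX N)
  have hY : ∀ N, 0 ≤ ∫ z, p z * log (pY z.2 / qY N z.2) ∧
      ∫ z, p z * log (pY z.2 / qY N z.2) ≤ ∫ z, p z * log (p z / q N z) := by
    intro N
    -- the same bound for the densities with their two arguments exchanged
    have swap_int : ∀ f : (Fin n → ℝ) × (Fin m → ℝ) → ℝ,
        ∫ z, f z.swap ∂((volume : Measure (Fin m → ℝ)).prod (volume : Measure (Fin n → ℝ))) =
          ∫ z, f z := fun f => integral_prod_swap f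
    have h := marginal_kl_bounds (μ := (volume : Measure (Fin m → ℝ)))
      (ν := (volume : Measure (Fin n → ℝ)))
      (p := fun z => p z.swap) (q := fun z => q N z.swap) (pX := pY) (qX := qY N)
      (hp_meas.comp measurable_swap) (fun z => hp_nonneg _) ((swap_int p).trans hp_int) hpY
      (Measure.measurePreserving_swap.quasiMeasurePreserving.ae
        (p := fun z => 0 < p z → 0 < pY z.2) (hp_supp.mono fun z h hz => (h hz).2))
      ((hq_meas N).comp measurable_swap) (fun z => hq_pos N _)
      ((swap_int (q N)).trans (hq_int N)) (hqY N)
      (h_int_KL N).swap (h_int_mY N).swap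
    rwa [← swap_int fun z => p z * log (pY z.2 / qY N z.2),
      ← swap_int fun z => p z * log (p z / q N z)]
  have key : ∀ N, ∫ z, p z * log (q N z / (qX N z.1 * qY N z.2)) =
      (∫ z, p z * log (p z / (pX z.1 * pY z.2))) -
        ((∫ z, p z * log (p z / q N z)) - (∫ z, p z * log (pX z.1 / qX N z.1)) -
          ∫ z, p z * log (pY z.2 / qY N z.2)) := by
    intro N
    have hq : Integrable (q N) := .of_integral_ne_zero (by simp [hq_int N])
    have hqXpos : ∀ᵐ z : (Fin n → ℝ) × (Fin m → ℝ), 0 < qX N z.1 :=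
      ae_marginal_pos (hq_pos N) hq (hqX N)
    have hqYpos : ∀ᵐ z : (Fin n → ℝ) × (Fin m → ℝ), 0 < qY N z.2 :=
      Measure.measurePreserving_swap.quasiMeasurePreserving.ae
        (p := fun z : (Fin m → ℝ) × (Fin n → ℝ) => 0 < qY N z.1)
        (ae_marginal_pos (q := fun z => q N z.swap) (fun z => hq_pos N _) hq.swap (hqY N))
    rw [← integral_sub' (h_int_KL N) (h_int_mX N),
      ← integral_sub' ((h_int_KL N).sub (h_int_mX N)) (h_int_mY N),
      ← integral_sub' h_int_I (((h_int_KL N).sub (h_int_mX N)).sub (h_int_mY N))]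
    refine integral_congr_ae ?_
    filter_upwards [hp_supp, hqXpos, hqYpos] with z hz h1 h2
    simp only [Pi.sub_apply]
    rcases (hp_nonneg z).eq_or_lt with h | h
    · simp [← h]
    · obtain ⟨h3, h4⟩ := hz h
      rw [log_div (hq_pos N z).ne' (by positivity), log_div h.ne' (by positivity),
        log_div h.ne' (hq_pos N z).ne', log_div h3.ne' h1.ne', log_div h4.ne' h2.ne',
        log_mul h1.ne' h2.ne', log_mul h3.ne' h4.ne']
      ring
  rw [tendsto_iff_dist_tendsto_zero]
  refine squeeze_zero (fun _ => dist_nonneg) (fun N => ?_) h_KL_tendsto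
  rw [Real.dist_eq, key N, abs_le]
  have hXN : 0 ≤ ∫ z, p z * log (pX z.1 / qX N z.1) ∧
      ∫ z, p z * log (pX z.1 / qX N z.1) ≤ ∫ z, p z * log (p z / q N z) := hX N
  have hYN := hY N
  constructor <;> linarith [hXN.1, hXN.2, hYN.1, hYN.2]
end

section
/- Let (ξ, η) be an absolutely continuous pair of random vectors with joint density p_{ξ,η}, mean m, and non-singular covariance matrix Σ with diagonal blocks Σ_{ξξ} = Cov(ξ) and Σ_{ηη} = Cov(η). Then |I(ξ; η) − (1/2)[log det Σ_{ξξ} + log det Σ_{ηη} − log det Σ]| ≤ D_KL(p_{ξ,η} ‖ N(m, Σ)). -/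
/-!
Write `g` for the density of `N(m, S)`, and `gX`, `gY` for its marginals, which are the Gaussian
densities with covariances `Sxx` and `Syy`. Since `p` has mean `m` and covariance `S`, the expected
quadratic forms are the dimensions, which cancel, so
`E_p log (g / (gX gY)) = (1/2) (log det Sxx + log det Syy - log det S)`
(`integral_mul_log_gaussianPdf`). Writing `K` for the divergence and `Δ` for the quantity inside the
absolute value, this gives

* `K - Δ = E_p [log (pX / gX) + log (pY / gY)]`, the sum of the divergences of the marginals;
* `K + Δ = E_p [log (p gX / (g pX)) + log (p gY / (g pY))]`, the sum of the two gaps in the data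
  processing inequality for passing to a marginal.

Both are nonnegative. To avoid asking for integrability of the individual logarithms, each sum is
bounded below pointwise by `p log (p / b) ≥ p - b`, with `b = p gX / pX`, `p gY / pY` in the first
case and `b = g pX / gX`, `g pY / gY` in the second. All four functions `b` have integral at
most `1` by Tonelli's theorem (`marginal_bounds`, `marginal_bounds_inr`); for the last two this uses
the formula for Gaussian marginals, `integral_gaussianPdf_inr`.
-/

open MeasureTheory Matrix Real

/-- The probability density function of the multivariate Gaussian distribution `N(m, S)`
on `ι → ℝ` with mean `m` and (positive-definite) covariance matrix `S`. -/
noncomputable def gaussianPdf {ι : Type*} [Fintype ι] [DecidableEq ι]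
    (m : ι → ℝ) (S : Matrix ι ι ℝ) (x : ι → ℝ) : ℝ :=
  (Real.sqrt ((2 * Real.pi) ^ (Fintype.card ι) * S.det))⁻¹ *
    Real.exp (-(1 / 2 : ℝ) * ((x - m) ⬝ᵥ S⁻¹.mulVec (x - m)))

/-! ### Gaussian densities -/

theorem PosDef_exists_factor {ι : Type*} [Fintype ι] [DecidableEq ι] {P : Matrix ι ι ℝ}
    (hP : P.PosDef) : ∃ B : Matrix ι ι ℝ, P = Bᵀ * B := by
  open scoped MatrixOrder ComplexOrder in
  obtain ⟨B, hB⟩ := CStarAlgebra.nonneg_iff_eq_star_mul_self.mp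
    (Matrix.nonneg_iff_posSemidef.mpr hP.posSemidef)
  exact ⟨B, by rw [hB, Matrix.star_eq_conjTranspose, Matrix.conjTranspose_eq_transpose_of_trivial]⟩

/-- The multivariate Gaussian integral, by the substitution `y = B x` where `P = Bᵀ B`. -/
theorem integral_exp_quadratic {ι : Type*} [Fintype ι] [DecidableEq ι] {P : Matrix ι ι ℝ}
    (hP : P.PosDef) :
    Integrable (fun x : ι → ℝ => Real.exp (-(1 / 2 : ℝ) * (x ⬝ᵥ P.mulVec x))) ∧
      ∫ x : ι → ℝ, Real.exp (-(1 / 2 : ℝ) * (x ⬝ᵥ P.mulVec x)) =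
        Real.sqrt ((2 * Real.pi) ^ (Fintype.card ι) / P.det) := by
  obtain ⟨B, rfl⟩ := PosDef_exists_factor hP
  have hdet : 0 < B.det * B.det := by simpa [det_mul] using hP.det_pos
  have hB : B.det ≠ 0 := by rintro h; simp [h] at hdet
  let G : (ι → ℝ) → ℝ := fun y => ∏ i, Real.exp (-(1 / 2 : ℝ) * y i ^ 2)
  have hG : Integrable G := Integrable.fintype_prod fun _ =>
    integrable_exp_neg_mul_sq (by norm_num)
  have hGint : ∫ y, G y = Real.sqrt (2 * Real.pi) ^ (Fintype.card ι) := by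
    simp only [G]
    rw [integral_fintype_prod_volume_eq_prod
      (fun _ : ι => fun t : ℝ => Real.exp (-(1 / 2 : ℝ) * t ^ 2))]
    simp only [integral_gaussian, Finset.prod_const, Finset.card_univ]
    congr 2
    ring
  have hcomp : (fun x : ι → ℝ => Real.exp (-(1 / 2 : ℝ) * (x ⬝ᵥ (Bᵀ * B).mulVec x)))
      = fun x => G (Matrix.toLin' B x) := by
    funext x
    simp only [G]
    rw [← Real.exp_sum, ← Finset.mul_sum, ← Matrix.mulVec_mulVec, Matrix.dotProduct_mulVec,
      Matrix.vecMul_transpose]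
    simp [dotProduct, pow_two]
  have hmap := Real.map_matrix_volume_pi_eq_smul_volume_pi hB
  have hmeas : AEMeasurable (Matrix.toLin' B) (volume : Measure (ι → ℝ)) :=
    (LinearMap.continuous_on_pi (Matrix.toLin' B)).aemeasurable
  have hG' : Integrable G (Measure.map (Matrix.toLin' B) volume) := by
    rw [hmap]; exact hG.smul_measure (by simp)
  refine ⟨hcomp ▸ hG'.comp_aemeasurable hmeas, ?_⟩
  rw [hcomp, ← integral_map hmeas hG'.aestronglyMeasurable, hmap, integral_smul_measure, hGint,
    ENNReal.toReal_ofReal (abs_nonneg _), det_mul, det_transpose, Real.sqrt_div (by positivity),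
    Real.sqrt_mul_self_eq_abs, Real.sqrt_eq_rpow, ← Real.rpow_natCast, ← Real.rpow_natCast,
    ← Real.rpow_mul (by positivity), Real.sqrt_eq_rpow, ← Real.rpow_mul (by positivity), abs_inv,
    smul_eq_mul, mul_comm (1 / 2 : ℝ)]
  ring

theorem gaussianPdf_pos {ι : Type*} [Fintype ι] [DecidableEq ι] (m : ι → ℝ) {S : Matrix ι ι ℝ}
    (hS : S.PosDef) (x : ι → ℝ) : 0 < gaussianPdf m S x := by
  have := hS.det_pos
  unfold gaussianPdf
  positivity

theorem continuous_gaussianPdf {ι : Type*} [Fintype ι] [DecidableEq ι] (m : ι → ℝ)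
    (S : Matrix ι ι ℝ) : Continuous (gaussianPdf m S) := by
  unfold gaussianPdf
  fun_prop

theorem gaussianPdf_integral {ι : Type*} [Fintype ι] [DecidableEq ι] (m : ι → ℝ)
    {S : Matrix ι ι ℝ} (hS : S.PosDef) :
    Integrable (gaussianPdf m S) ∧ ∫ x, gaussianPdf m S x = 1 := by
  obtain ⟨h1, h2⟩ := integral_exp_quadratic hS.inv
  have := hS.det_pos
  refine ⟨(h1.comp_sub_right m).const_mul _, ?_⟩
  simp only [gaussianPdf]
  rw [integral_const_mul, integral_sub_right_eq_self
    (fun x : ι → ℝ => Real.exp (-(1 / 2 : ℝ) * (x ⬝ᵥ S⁻¹.mulVec x))) m, h2, det_nonsing_inv,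
    Ring.inverse_eq_inv', div_inv_eq_mul]
  exact inv_mul_cancel₀ (by positivity)

theorem log_gaussianPdf {ι : Type*} [Fintype ι] [DecidableEq ι] (m : ι → ℝ) {S : Matrix ι ι ℝ}
    (hS : S.PosDef) (x : ι → ℝ) : Real.log (gaussianPdf m S x) =
      -(1 / 2 : ℝ) * (Fintype.card ι * Real.log (2 * Real.pi) + Real.log S.det)
        - (1 / 2 : ℝ) * ((x - m) ⬝ᵥ S⁻¹.mulVec (x - m)) := by
  have := hS.det_pos
  unfold gaussianPdf
  rw [Real.log_mul (by positivity) (by positivity), Real.log_exp, Real.log_inv,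
    Real.log_sqrt (by positivity), Real.log_mul (by positivity) (by positivity), Real.log_pow]
  ring

/-- The marginal of `N(m, S)` on the first block of coordinates is the Gaussian with the
corresponding subvector of `m` and submatrix of `S`. The square is completed in `y` using the blocks
`E, Q, Qᴴ, D` of the precision matrix `S⁻¹`, whose Schur complement `E - Q D⁻¹ Qᴴ` is the inverse
of the first diagonal block of `S`. -/
theorem integral_gaussianPdf_inr {ι κ : Type*} [Fintype ι] [DecidableEq ι] [Fintype κ]
    [DecidableEq κ] (m : ι ⊕ κ → ℝ) {S : Matrix (ι ⊕ κ) (ι ⊕ κ) ℝ} (hS : S.PosDef) (x : ι → ℝ) :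
    ∫ y : κ → ℝ, gaussianPdf m S (Sum.elim x y) =
      gaussianPdf (m ∘ Sum.inl) (S.submatrix Sum.inl Sum.inl) x := by
  have hSdet := hS.det_pos
  have hSx : (S.submatrix Sum.inl Sum.inl : Matrix ι ι ℝ).PosDef := hS.submatrix Sum.inl_injective
  have hSxdet := hSx.det_pos
  set A := S.toBlocks₁₁ with hA
  have hAe : S.submatrix Sum.inl Sum.inl = A := rfl
  rw [hAe] at hSx hSxdet ⊢
  have hPpos := hS.inv
  set D := S⁻¹.toBlocks₂₂ with hD
  set Q := S⁻¹.toBlocks₁₂ with hQ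
  set E := S⁻¹.toBlocks₁₁ with hE
  have hDpos : D.PosDef := hPpos.submatrix Sum.inr_injective
  have hDdet := hDpos.det_pos
  have : Invertible D := invertibleOfIsUnitDet D hDdet.ne'.isUnit
  have hP : S⁻¹ = fromBlocks E Q Qᴴ D := by
    conv_lhs => rw [← fromBlocks_toBlocks S⁻¹]
    congr 1
    ext i j
    exact (hPpos.isHermitian.apply (Sum.inr i) (Sum.inl j)).symm
  have hSP : S * S⁻¹ = 1 := mul_nonsing_inv S hSdet.ne'.isUnit
  rw [hP] at hSP
  conv_lhs at hSP => rw [← fromBlocks_toBlocks S]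
  rw [fromBlocks_multiply, ← fromBlocks_one, fromBlocks_inj] at hSP
  obtain ⟨h11, h12, -, -⟩ := hSP
  have hinv : A * (E - Q * D⁻¹ * Qᴴ) = 1 := by
    have : S.toBlocks₁₂ = -(A * Q * D⁻¹) := by
      have h := congrArg (· * D⁻¹) h12
      simp only [Matrix.add_mul, Matrix.mul_assoc, mul_nonsing_inv D hDdet.ne'.isUnit,
        Matrix.zero_mul, Matrix.mul_one] at h
      rw [Matrix.mul_assoc]
      exact eq_neg_of_add_eq_zero_right h
    rw [this] at h11
    rw [← h11]
    rw [Matrix.mul_sub, sub_eq_add_neg, Matrix.neg_mul, Matrix.mul_assoc, Matrix.mul_assoc,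
      Matrix.mul_assoc]
  have hinv' : E - Q * D⁻¹ * Qᴴ = A⁻¹ := (inv_eq_right_inv hinv).symm
  have hdet : S.det⁻¹ = D.det * A.det⁻¹ := by
    have h := congrArg Matrix.det hP
    rw [det_fromBlocks₂₂, invOf_eq_nonsing_inv, hinv', det_nonsing_inv, det_nonsing_inv,
      Ring.inverse_eq_inv'] at h
    exact h
  have hquad : ∀ y : κ → ℝ, (Sum.elim x y - m) ⬝ᵥ S⁻¹.mulVec (Sum.elim x y - m) =
      (y + ((D⁻¹ * Qᴴ) *ᵥ (x - m ∘ Sum.inl) - m ∘ Sum.inr)) ⬝ᵥ D.mulVec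
        (y + ((D⁻¹ * Qᴴ) *ᵥ (x - m ∘ Sum.inl) - m ∘ Sum.inr)) +
      (x - m ∘ Sum.inl) ⬝ᵥ A⁻¹.mulVec (x - m ∘ Sum.inl) := by
    intro y
    have h := schur_complement_eq₂₂ E Q (x - m ∘ Sum.inl) (y - m ∘ Sum.inr) hDpos.isHermitian
    have e1 : Sum.elim x y - m = Sum.elim (x - m ∘ Sum.inl) (y - m ∘ Sum.inr) := by
      funext k; cases k <;> rfl
    have e2 : (D⁻¹ * Qᴴ) *ᵥ (x - m ∘ Sum.inl) + (y - m ∘ Sum.inr) =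
      y + ((D⁻¹ * Qᴴ) *ᵥ (x - m ∘ Sum.inl) - m ∘ Sum.inr) := by abel
    rw [← hP, hinv', e2] at h
    simpa [e1, dotProduct_mulVec] using h
  obtain ⟨-, h2⟩ := integral_exp_quadratic hDpos
  simp only [gaussianPdf, hquad, mul_add, Real.exp_add]
  rw [integral_const_mul, integral_mul_const, integral_add_right_eq_self
    (fun y : κ → ℝ => Real.exp (-(1 / 2 : ℝ) * (y ⬝ᵥ D.mulVec y))), h2, ← mul_assoc]
  congr 1
  rw [← Real.sqrt_inv, ← Real.sqrt_inv, ← Real.sqrt_mul (by positivity)]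
  congr 1
  rw [mul_inv, hdet, Fintype.card_sum, pow_add]
  field_simp

/-! ### Marginals and Tonelli's theorem -/

theorem integral_sum_pi {ι κ : Type*} [Fintype ι] [Fintype κ] {f : (ι ⊕ κ → ℝ) → ℝ}
    (hf : Integrable f) :
    Integrable (fun w : (ι → ℝ) × (κ → ℝ) => f (Sum.elim w.1 w.2)) ∧
      ∫ z, f z = ∫ x : ι → ℝ, ∫ y : κ → ℝ, f (Sum.elim x y) := by
  have hmp := volume_measurePreserving_sumPiEquivProdPi_symm (fun _ : ι ⊕ κ => ℝ)
  have he : ∀ w : (ι → ℝ) × (κ → ℝ),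
      (MeasurableEquiv.sumPiEquivProdPi (fun _ : ι ⊕ κ => ℝ)).symm w = Sum.elim w.1 w.2 := by
    intro w; funext k; cases k <;> rfl
  have h1 : Integrable (fun w : (ι → ℝ) × (κ → ℝ) => f (Sum.elim w.1 w.2)) := by
    have := (hmp.integrable_comp_emb (MeasurableEquiv.measurableEmbedding _)).mpr hf
    simpa only [Function.comp_def, he] using this
  refine ⟨h1, ?_⟩
  rw [← hmp.integral_comp' f]
  simp only [he]
  exact integral_prod _ h1

theorem measurable_sum_elim {ι κ : Type*} :
    Measurable (fun w : (ι → ℝ) × (κ → ℝ) => (Sum.elim w.1 w.2 : ι ⊕ κ → ℝ)) := by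
  rw [measurable_pi_iff]
  rintro (i | j)
  · exact (measurable_pi_apply i).comp measurable_fst
  · exact (measurable_pi_apply j).comp measurable_snd

/-- Tonelli: if `h` depends on the first block only, then `∫ f h` equals the integral of `h` times the
first marginal of `f`, hence is at most `∫ r` for any integrable `r` dominating that product. -/
theorem integral_mul_marginal_le {ι κ : Type*} [Fintype ι] [Fintype κ] {f : (ι ⊕ κ → ℝ) → ℝ}
    (hfm : Measurable f) (hf0 : ∀ z, 0 ≤ f z) (hf : Integrable f)
    {h r : (ι → ℝ) → ℝ} (hhm : Measurable h) (hh0 : ∀ x, 0 ≤ h x) (hr : Integrable r)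
    (hle : ∀ x, h x * ∫ y : κ → ℝ, f (Sum.elim x y) ≤ r x) :
    Integrable (fun z : ι ⊕ κ → ℝ => f z * h (z ∘ Sum.inl)) ∧
      ∫ z : ι ⊕ κ → ℝ, f z * h (z ∘ Sum.inl) ≤ ∫ x, r x := by
  have hF0 : ∀ x : ι → ℝ, 0 ≤ ∫ y : κ → ℝ, f (Sum.elim x y) :=
    fun x => integral_nonneg fun y => hf0 _
  have hmeas : Measurable (fun w : (ι → ℝ) × (κ → ℝ) => f (Sum.elim w.1 w.2) * h w.1) :=
    (hfm.comp measurable_sum_elim).mul (hhm.comp measurable_fst)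
  have hint : Integrable (fun w : (ι → ℝ) × (κ → ℝ) => f (Sum.elim w.1 w.2) * h w.1) := by
    refine (integrable_prod_iff hmeas.aestronglyMeasurable).mpr ⟨?_, ?_⟩
    · filter_upwards [(integral_sum_pi hf).1.prod_right_ae] with x hx
      exact hx.mul_const _
    · refine hr.mono' ?_ (Filter.Eventually.of_forall fun x => ?_)
      · exact (hmeas.stronglyMeasurable.norm.integral_prod_right'
          (ν := (volume : Measure (κ → ℝ)))).aestronglyMeasurable
      · simp only [Real.norm_eq_abs, abs_mul, abs_of_nonneg (hf0 _), abs_of_nonneg (hh0 _)]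
        rw [integral_mul_const, abs_of_nonneg (mul_nonneg (hF0 x) (hh0 x)), mul_comm]
        exact hle x
  have hint' : Integrable (fun z : ι ⊕ κ → ℝ => f z * h (z ∘ Sum.inl)) := by
    have hmp := volume_measurePreserving_sumPiEquivProdPi_symm (fun _ : ι ⊕ κ => ℝ)
    rw [← hmp.integrable_comp_emb (MeasurableEquiv.measurableEmbedding _)]
    convert hint using 2 with w
    have he : (MeasurableEquiv.sumPiEquivProdPi (fun _ : ι ⊕ κ => ℝ)).symm w
        = Sum.elim w.1 w.2 := by
      funext k; cases k <;> rfl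
    simp only [Function.comp_apply, he, Sum.elim_comp_inl]
  refine ⟨hint', ?_⟩
  rw [(integral_sum_pi hint').2]
  simp only [Sum.elim_comp_inl, integral_mul_const]
  refine integral_mono_of_nonneg (Filter.Eventually.of_forall fun x =>
    mul_nonneg (hF0 x) (hh0 x)) hr (Filter.Eventually.of_forall fun x => ?_)
  simpa only [mul_comm] using hle x

/-- The two subprobability densities attached to the first marginal: with `gX` the first marginal of
the Gaussian density `g`, the functions `p * (gX / pX)` and `g * (pX / gX)` both have integral at
most `1`. The first integral is that of `gX` over `{pX > 0}`; where `pX = 0`, the junk value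
`gX / 0 = 0` is harmless. -/
theorem marginal_bounds {ι κ : Type*} [Fintype ι] [DecidableEq ι] [Fintype κ] [DecidableEq κ]
    {p : (ι ⊕ κ → ℝ) → ℝ} (hpm : Measurable p) (hp0 : ∀ z, 0 ≤ p z) (hp : ∫ z, p z = 1)
    {pX : (ι → ℝ) → ℝ} (hpX : ∀ x, pX x = ∫ y : κ → ℝ, p (Sum.elim x y))
    (m : ι ⊕ κ → ℝ) {S : Matrix (ι ⊕ κ) (ι ⊕ κ) ℝ} (hS : S.PosDef) :
    (Integrable (fun z : ι ⊕ κ → ℝ => p z *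
        (gaussianPdf (m ∘ Sum.inl) (S.submatrix Sum.inl Sum.inl) (z ∘ Sum.inl) /
          pX (z ∘ Sum.inl))) ∧
      ∫ z : ι ⊕ κ → ℝ, p z *
        (gaussianPdf (m ∘ Sum.inl) (S.submatrix Sum.inl Sum.inl) (z ∘ Sum.inl) /
          pX (z ∘ Sum.inl)) ≤ 1) ∧
    (Integrable (fun z : ι ⊕ κ → ℝ => gaussianPdf m S z *
        (pX (z ∘ Sum.inl) /
          gaussianPdf (m ∘ Sum.inl) (S.submatrix Sum.inl Sum.inl) (z ∘ Sum.inl))) ∧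
      ∫ z : ι ⊕ κ → ℝ, gaussianPdf m S z *
        (pX (z ∘ Sum.inl) /
          gaussianPdf (m ∘ Sum.inl) (S.submatrix Sum.inl Sum.inl) (z ∘ Sum.inl)) ≤ 1) := by
  obtain rfl : pX = fun x => ∫ y : κ → ℝ, p (Sum.elim x y) := funext hpX
  have hSx : (S.submatrix Sum.inl Sum.inl : Matrix ι ι ℝ).PosDef := hS.submatrix Sum.inl_injective
  have hpi : Integrable p := integrable_of_integral_eq_one hp
  have hpX0 : ∀ x : ι → ℝ, 0 ≤ ∫ y : κ → ℝ, p (Sum.elim x y) :=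
    fun x => integral_nonneg fun y => hp0 _
  have hpXm : Measurable (fun x : ι → ℝ => ∫ y : κ → ℝ, p (Sum.elim x y)) :=
    ((hpm.comp measurable_sum_elim).stronglyMeasurable.integral_prod_right'
      (ν := (volume : Measure (κ → ℝ)))).measurable
  have hgX0 := gaussianPdf_pos (m ∘ Sum.inl) hSx
  have hgXm := (continuous_gaussianPdf (m ∘ Sum.inl) (S.submatrix Sum.inl Sum.inl)).measurable
  constructor
  · have := integral_mul_marginal_le hpm hp0 hpi (hgXm.div hpXm)
      (fun x => div_nonneg (hgX0 x).le (hpX0 x)) (gaussianPdf_integral (m ∘ Sum.inl) hSx).1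
      (fun x => by
        rcases (hpX0 x).eq_or_lt with h | h
        · rw [← h, mul_zero]; exact (hgX0 x).le
        · exact (div_mul_cancel₀ _ h.ne').le)
    rwa [(gaussianPdf_integral (m ∘ Sum.inl) hSx).2] at this
  · have := integral_mul_marginal_le (continuous_gaussianPdf m S).measurable
      (fun z => (gaussianPdf_pos m hS z).le) (gaussianPdf_integral m hS).1 (hpXm.div hgXm)
      (fun x => div_nonneg (hpX0 x) (hgX0 x).le)
      (integral_sum_pi hpi).1.integral_prod_left
      (fun x => by
        rw [integral_gaussianPdf_inr m hS]
        exact (div_mul_cancel₀ _ (hgX0 x).ne').le)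
    rwa [← (integral_sum_pi hpi).2, hp] at this

theorem measurePreserving_swap (ι κ : Type*) [Fintype ι] [Fintype κ] :
    ∃ e : (ι ⊕ κ → ℝ) ≃ᵐ (κ ⊕ ι → ℝ), MeasurePreserving e volume volume ∧
      ∀ z, e z = z ∘ Sum.swap :=
  ⟨MeasurableEquiv.arrowCongr' (Equiv.sumComm ι κ) (MeasurableEquiv.refl ℝ),
    volume_preserving_arrowCongr' _ _ (MeasurePreserving.id _), fun _ => rfl⟩

theorem gaussianPdf_comp_equiv {ι κ : Type*} [Fintype ι] [DecidableEq ι] [Fintype κ]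
    [DecidableEq κ] (e : κ ≃ ι) (m : ι → ℝ) (S : Matrix ι ι ℝ) (z : ι → ℝ) :
    gaussianPdf (m ∘ e) (S.submatrix e e) (z ∘ e) = gaussianPdf m S z := by
  unfold gaussianPdf
  rw [det_submatrix_equiv_self, inv_submatrix_equiv, Fintype.card_congr e]
  congr 4
  have : z ∘ e - m ∘ e = (z - m) ∘ e := rfl
  rw [this, submatrix_mulVec_equiv, Function.comp_assoc, Equiv.self_comp_symm, Function.comp_id,
    comp_equiv_dotProduct_comp_equiv]

/-- The analogue of `marginal_bounds` for the second marginal, by exchanging the two blocks. -/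
theorem marginal_bounds_inr {ι κ : Type*} [Fintype ι] [DecidableEq ι] [Fintype κ] [DecidableEq κ]
    {p : (ι ⊕ κ → ℝ) → ℝ} (hpm : Measurable p) (hp0 : ∀ z, 0 ≤ p z) (hp : ∫ z, p z = 1)
    {pY : (κ → ℝ) → ℝ} (hpY : ∀ y, pY y = ∫ x : ι → ℝ, p (Sum.elim x y))
    (m : ι ⊕ κ → ℝ) {S : Matrix (ι ⊕ κ) (ι ⊕ κ) ℝ} (hS : S.PosDef) :
    (Integrable (fun z : ι ⊕ κ → ℝ => p z *
        (gaussianPdf (m ∘ Sum.inr) (S.submatrix Sum.inr Sum.inr) (z ∘ Sum.inr) /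
          pY (z ∘ Sum.inr))) ∧
      ∫ z : ι ⊕ κ → ℝ, p z *
        (gaussianPdf (m ∘ Sum.inr) (S.submatrix Sum.inr Sum.inr) (z ∘ Sum.inr) /
          pY (z ∘ Sum.inr)) ≤ 1) ∧
    (Integrable (fun z : ι ⊕ κ → ℝ => gaussianPdf m S z *
        (pY (z ∘ Sum.inr) /
          gaussianPdf (m ∘ Sum.inr) (S.submatrix Sum.inr Sum.inr) (z ∘ Sum.inr))) ∧
      ∫ z : ι ⊕ κ → ℝ, gaussianPdf m S z *
        (pY (z ∘ Sum.inr) /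
          gaussianPdf (m ∘ Sum.inr) (S.submatrix Sum.inr Sum.inr) (z ∘ Sum.inr)) ≤ 1) := by
  obtain ⟨e, he, hez⟩ := measurePreserving_swap κ ι
  obtain ⟨⟨h1, h2⟩, ⟨h3, h4⟩⟩ := marginal_bounds (p := fun w => p (e w)) (hpm.comp e.measurable)
    (fun w => hp0 _)
    (by rw [he.integral_comp' p, hp]) (pX := pY)
    (fun y => by
      rw [hpY]
      congr with x
      rw [hez]
      congr 1
      funext k; cases k <;> rfl) (m ∘ Sum.swap)
    (hS.submatrix (Equiv.sumComm κ ι).injective)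
  have hg : ∀ w : κ ⊕ ι → ℝ, gaussianPdf (m ∘ Sum.swap)
      (S.submatrix (Equiv.sumComm κ ι) (Equiv.sumComm κ ι)) w = gaussianPdf m S (e w) := by
    intro w
    rw [← gaussianPdf_comp_equiv (Equiv.sumComm κ ι) m S (e w), hez]
    congr 1
    funext k; cases k <;> rfl
  have hc : ∀ w : κ ⊕ ι → ℝ, w ∘ Sum.inl = e w ∘ Sum.inr := by
    intro w; rw [hez]; rfl
  have hm' : (m ∘ Sum.swap) ∘ (Sum.inl : κ → κ ⊕ ι) = m ∘ Sum.inr := rfl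
  have hS' : (S.submatrix (Equiv.sumComm κ ι) (Equiv.sumComm κ ι)).submatrix Sum.inl Sum.inl =
      (S.submatrix Sum.inr Sum.inr : Matrix κ κ ℝ) := rfl
  simp only [hm', hS', hg] at h1 h2 h3 h4
  simp only [hc] at h1 h2 h3 h4
  have hemb := e.measurableEmbedding
  refine ⟨⟨(he.integrable_comp_emb hemb).mp h1, ?_⟩, ⟨(he.integrable_comp_emb hemb).mp h3, ?_⟩⟩
  · rw [← he.integral_comp']; exact h2
  · rw [← he.integral_comp']; exact h4

/-! ### Logarithms and the Gibbs inequality -/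

/-- The expected Gaussian log-density of a subvector (the coordinates selected by `e`) depends only
on the determinant of its covariance matrix: the expected quadratic form is
`tr (T⁻¹ * T) = card κ`, where `T` is the covariance submatrix. -/
theorem integral_mul_log_gaussianPdf {J κ : Type*} [Fintype J] [DecidableEq J] [Fintype κ]
    [DecidableEq κ] {e : κ → J} (he : Function.Injective e)
    {p : (J → ℝ) → ℝ} (hp : ∫ z, p z = 1) {m : J → ℝ} {S : Matrix J J ℝ} (hS : S.PosDef)
    (hint : ∀ k l, Integrable fun z : J → ℝ => p z * ((z k - m k) * (z l - m l)))
    (hcov : ∀ k l, ∫ z : J → ℝ, p z * ((z k - m k) * (z l - m l)) = S k l) :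
    Integrable (fun z : J → ℝ =>
        p z * Real.log (gaussianPdf (m ∘ e) (S.submatrix e e) (z ∘ e))) ∧
      ∫ z : J → ℝ, p z * Real.log (gaussianPdf (m ∘ e) (S.submatrix e e) (z ∘ e)) =
        -(1 / 2 : ℝ) * (Fintype.card κ * Real.log (2 * Real.pi) +
          Real.log (S.submatrix e e).det + Fintype.card κ) := by
  have hpi : Integrable p := integrable_of_integral_eq_one hp
  have hT : (S.submatrix e e).PosDef := hS.submatrix he
  set T := S.submatrix e e with hTdef
  have hexp : ∀ z : J → ℝ, p z * Real.log (gaussianPdf (m ∘ e) T (z ∘ e)) =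
      (-(1 / 2 : ℝ) * (Fintype.card κ * Real.log (2 * Real.pi) + Real.log T.det)) * p z -
        (1 / 2 : ℝ) * ∑ i, ∑ j, T⁻¹ i j *
          (p z * ((z (e i) - m (e i)) * (z (e j) - m (e j)))) := by
    intro z
    rw [log_gaussianPdf _ hT]
    have : p z * ((z ∘ e - m ∘ e) ⬝ᵥ T⁻¹.mulVec (z ∘ e - m ∘ e)) = ∑ i, ∑ j, T⁻¹ i j *
          (p z * ((z (e i) - m (e i)) * (z (e j) - m (e j)))) := by
      simp only [dotProduct, mulVec, Finset.mul_sum, Pi.sub_apply, Function.comp_apply]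
      exact Finset.sum_congr rfl fun i _ => Finset.sum_congr rfl fun j _ => by ring
    rw [← this]
    ring
  have hsum : Integrable (fun z : J → ℝ => ∑ i, ∑ j, T⁻¹ i j *
      (p z * ((z (e i) - m (e i)) * (z (e j) - m (e j))))) :=
    integrable_finsetSum _ fun i _ => integrable_finsetSum _ fun j _ => (hint _ _).const_mul _
  have htr : ∑ i, ∑ j, T⁻¹ i j * S (e i) (e j) = Fintype.card κ := by
    have h1 : (T⁻¹ * T).trace = Fintype.card κ := by
      rw [nonsing_inv_mul T hT.det_pos.ne'.isUnit, trace_one]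
    rw [← h1]
    refine Finset.sum_congr rfl fun i _ => Finset.sum_congr rfl fun j _ => ?_
    exact congrArg (T⁻¹ i j * ·) (hS.isHermitian.apply (e i) (e j)).symm
  have hsum_eq : ∫ z : J → ℝ, ∑ i, ∑ j, T⁻¹ i j *
      (p z * ((z (e i) - m (e i)) * (z (e j) - m (e j)))) = Fintype.card κ := by
    rw [← htr, integral_finsetSum]
    · refine Finset.sum_congr rfl fun i _ => ?_
      rw [integral_finsetSum]
      · exact Finset.sum_congr rfl fun j _ => by rw [integral_const_mul, hcov]
      · exact fun j _ => (hint _ _).const_mul _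
    · exact fun i _ => integrable_finsetSum _ fun j _ => (hint _ _).const_mul _
  simp only [hexp]
  refine ⟨(hpi.const_mul _).sub (hsum.const_mul _), ?_⟩
  rw [integral_sub (hpi.const_mul _) (hsum.const_mul _), integral_const_mul, integral_const_mul,
    hp, hsum_eq]
  ring

/-- The pointwise Gibbs inequality `a - b ≤ a (log a - log b)`, allowing `a = 0`. -/
theorem sub_le_mul_log_div {a b : ℝ} (ha : 0 ≤ a) (hb : 0 < a → 0 < b) (hb0 : 0 ≤ b) :
    a - b ≤ a * (Real.log a - Real.log b) := by
  rcases ha.eq_or_lt with rfl | ha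
  · simpa using hb0
  · have hb := hb ha
    have h := Real.one_sub_inv_le_log_of_pos (div_pos ha hb)
    rw [Real.log_div ha.ne' hb.ne', inv_div] at h
    calc a - b = a * (1 - b / a) := by field_simp
      _ ≤ _ := by gcongr

/-- Let `(ξ, η)` be an absolutely continuous pair of random vectors with
joint density `p`, mean `m`, and non-singular covariance matrix `S` with diagonal blocks
`Sxx = Cov(ξ)` and `Syy = Cov(η)`.  Then

`|I(ξ; η) − (1/2)[log det Sxx + log det Syy − log det S]| ≤ D_KL(p ‖ N(m, S))`.

The joint vector `(ξ, η)` is modelled as a random vector indexed by `Fin dx ⊕ Fin dy`,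
with `ξ` the `Sum.inl` coordinates and `η` the `Sum.inr` coordinates. -/
theorem mutual_information_gaussian_error_bound
    (dx dy : ℕ)
    -- joint density of (ξ, η) on ℝ^{dx+dy} and its marginals
    (p : ((Fin dx ⊕ Fin dy) → ℝ) → ℝ)
    (hp_meas : Measurable p)
    (hp_nonneg : ∀ z, 0 ≤ p z)
    (hp_int : ∫ z, p z = 1)
    (pX : (Fin dx → ℝ) → ℝ) (hpX : ∀ x, pX x = ∫ y : Fin dy → ℝ, p (Sum.elim x y))
    (pY : (Fin dy → ℝ) → ℝ) (hpY : ∀ y, pY y = ∫ x : Fin dx → ℝ, p (Sum.elim x y))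
    -- on the support of p the marginal densities of p are positive (holds a.e.)
    (hp_supp : ∀ᵐ z : (Fin dx ⊕ Fin dy) → ℝ ∂volume,
      0 < p z → 0 < pX (fun i => z (Sum.inl i)) ∧ 0 < pY (fun j => z (Sum.inr j)))
    -- mean and covariance matrix of (ξ, η), with block structure
    (m : (Fin dx ⊕ Fin dy) → ℝ)
    (S : Matrix (Fin dx ⊕ Fin dy) (Fin dx ⊕ Fin dy) ℝ)
    (h_moment₁ : ∀ k, Integrable fun z : (Fin dx ⊕ Fin dy) → ℝ => p z * z k)
    (hm : ∀ k, (∫ z : (Fin dx ⊕ Fin dy) → ℝ, p z * z k) = m k)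
    (h_moment₂ : ∀ k l, Integrable fun z : (Fin dx ⊕ Fin dy) → ℝ =>
      p z * ((z k - m k) * (z l - m l)))
    (hScov : ∀ k l, (∫ z : (Fin dx ⊕ Fin dy) → ℝ, p z * ((z k - m k) * (z l - m l))) = S k l)
    (hS_posdef : S.PosDef)
    (Sxx : Matrix (Fin dx) (Fin dx) ℝ) (Sxy : Matrix (Fin dx) (Fin dy) ℝ)
    (Syx : Matrix (Fin dy) (Fin dx) ℝ) (Syy : Matrix (Fin dy) (Fin dy) ℝ)
    (hblocks : S = Matrix.fromBlocks Sxx Sxy Syx Syy)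
    -- integrability of all the integrands involved
    (h_int_I : Integrable fun z : (Fin dx ⊕ Fin dy) → ℝ =>
      p z * Real.log (p z / (pX (fun i => z (Sum.inl i)) * pY (fun j => z (Sum.inr j)))))
    (h_int_KL : Integrable fun z : (Fin dx ⊕ Fin dy) → ℝ =>
      p z * Real.log (p z / gaussianPdf m S z))
    (h_int_KLm : Integrable fun z : (Fin dx ⊕ Fin dy) → ℝ =>
      pX (fun i => z (Sum.inl i)) * pY (fun j => z (Sum.inr j)) *
        Real.log ((pX (fun i => z (Sum.inl i)) * pY (fun j => z (Sum.inr j)))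
          / gaussianPdf m (Matrix.fromBlocks Sxx 0 0 Syy) z))
    (h_int_pp : Integrable fun z : (Fin dx ⊕ Fin dy) → ℝ => p z * Real.log (p z)) :
    -- |I(ξ; η) − (1/2)[log det Sxx + log det Syy − log det S]| ≤ D_KL(p ‖ N(m, S))
    |(∫ z : (Fin dx ⊕ Fin dy) → ℝ,
        p z * Real.log (p z / (pX (fun i => z (Sum.inl i)) * pY (fun j => z (Sum.inr j)))))
        - (1 / 2 : ℝ) * (Real.log Sxx.det + Real.log Syy.det - Real.log S.det)|
      ≤ ∫ z : (Fin dx ⊕ Fin dy) → ℝ, p z * Real.log (p z / gaussianPdf m S z) := by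
  have hSx : (S.submatrix Sum.inl Sum.inl : Matrix (Fin dx) (Fin dx) ℝ) = Sxx := by
    rw [hblocks]; rfl
  have hSy : (S.submatrix Sum.inr Sum.inr : Matrix (Fin dy) (Fin dy) ℝ) = Syy := by
    rw [hblocks]; rfl
  have hSxpos : Sxx.PosDef := hSx ▸ hS_posdef.submatrix Sum.inl_injective
  have hSypos : Syy.PosDef := hSy ▸ hS_posdef.submatrix Sum.inr_injective
  have hpi : Integrable p := integrable_of_integral_eq_one hp_int
  obtain ⟨⟨ia1, ha1⟩, ⟨ia2, ha2⟩⟩ := marginal_bounds hp_meas hp_nonneg hp_int hpX m hS_posdef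
  obtain ⟨⟨ib1, hb1⟩, ⟨ib2, hb2⟩⟩ := marginal_bounds_inr hp_meas hp_nonneg hp_int hpY m hS_posdef
  obtain ⟨ig, hg⟩ := integral_mul_log_gaussianPdf Function.injective_id hp_int hS_posdef
    h_moment₂ hScov
  obtain ⟨igx, hgx⟩ := integral_mul_log_gaussianPdf Sum.inl_injective hp_int hS_posdef
    h_moment₂ hScov
  obtain ⟨igy, hgy⟩ := integral_mul_log_gaussianPdf Sum.inr_injective hp_int hS_posdef
    h_moment₂ hScov
  rw [hSx] at ia1 ha1 ia2 ha2 igx hgx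
  rw [hSy] at ib1 hb1 ib2 hb2 igy hgy
  simp only [Function.comp_id, submatrix_id_id] at ig hg
  have hpX0 : ∀ x, 0 ≤ pX x := fun x => hpX x ▸ integral_nonneg fun y => hp_nonneg _
  have hpY0 : ∀ y, 0 ≤ pY y := fun y => hpY y ▸ integral_nonneg fun x => hp_nonneg _
  have hgpos := gaussianPdf_pos m hS_posdef
  have hgxpos := gaussianPdf_pos (m ∘ Sum.inl) hSxpos
  have hgypos := gaussianPdf_pos (m ∘ Sum.inr) hSypos
  -- Integrated sum of `p - b ≤ p log (p / b)` for `b = p gX / pX` and `b = p gY / pY`.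
  have hupper := integral_mono_ae
    (((hpi.const_mul 2).sub ia1).sub ib1)
    ((h_int_KL.sub h_int_I).add ((ig.sub igx).sub igy)) (by
      filter_upwards [hp_supp] with z hz
      have e1 := sub_le_mul_log_div (hp_nonneg z)
        (b := p z * (gaussianPdf (m ∘ Sum.inl) Sxx (z ∘ Sum.inl) / pX (z ∘ Sum.inl)))
        (fun h => mul_pos h (div_pos (hgxpos _) (hz h).1))
        (mul_nonneg (hp_nonneg z) (div_nonneg (hgxpos _).le (hpX0 _)))
      have e2 := sub_le_mul_log_div (hp_nonneg z)
        (b := p z * (gaussianPdf (m ∘ Sum.inr) Syy (z ∘ Sum.inr) / pY (z ∘ Sum.inr)))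
        (fun h => mul_pos h (div_pos (hgypos _) (hz h).2))
        (mul_nonneg (hp_nonneg z) (div_nonneg (hgypos _).le (hpY0 _)))
      rcases (hp_nonneg z).eq_or_lt with h0 | h0
      · simp [← h0]
      · obtain ⟨hx, hy⟩ := hz h0
        change 0 < pX (z ∘ Sum.inl) at hx
        change 0 < pY (z ∘ Sum.inr) at hy
        have hgz := hgpos z
        have hgxz := hgxpos (z ∘ Sum.inl)
        have hgyz := hgypos (z ∘ Sum.inr)
        rw [Real.log_mul h0.ne' (by positivity), Real.log_div hgxz.ne' hx.ne'] at e1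
        rw [Real.log_mul h0.ne' (by positivity), Real.log_div hgyz.ne' hy.ne'] at e2
        change _ ≤ (p z * Real.log (p z / gaussianPdf m S z) -
          p z * Real.log (p z / (pX (z ∘ Sum.inl) * pY (z ∘ Sum.inr)))) + _
        rw [Real.log_div h0.ne' hgz.ne', Real.log_div h0.ne' (by positivity),
          Real.log_mul hx.ne' hy.ne']
        simp only [Pi.sub_apply]
        linarith)
  -- The same for `b = g pX / gX` and `b = g pY / gY`.
  have hlower := integral_mono_ae
    (((hpi.const_mul 2).sub ia2).sub ib2)
    ((h_int_KL.add h_int_I).sub ((ig.sub igx).sub igy)) (by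
      filter_upwards [hp_supp] with z hz
      have e1 := sub_le_mul_log_div (hp_nonneg z)
        (b := gaussianPdf m S z * (pX (z ∘ Sum.inl) / gaussianPdf (m ∘ Sum.inl) Sxx (z ∘ Sum.inl)))
        (fun h => mul_pos (hgpos z) (div_pos (hz h).1 (hgxpos _)))
        (mul_nonneg (hgpos z).le (div_nonneg (hpX0 _) (hgxpos _).le))
      have e2 := sub_le_mul_log_div (hp_nonneg z)
        (b := gaussianPdf m S z * (pY (z ∘ Sum.inr) / gaussianPdf (m ∘ Sum.inr) Syy (z ∘ Sum.inr)))
        (fun h => mul_pos (hgpos z) (div_pos (hz h).2 (hgypos _)))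
        (mul_nonneg (hgpos z).le (div_nonneg (hpY0 _) (hgypos _).le))
      rcases (hp_nonneg z).eq_or_lt with h0 | h0
      · simp only [← h0, zero_mul, zero_sub] at e1 e2
        simp only [Pi.sub_apply, Pi.add_apply, ← h0]
        linarith
      · obtain ⟨hx, hy⟩ := hz h0
        change 0 < pX (z ∘ Sum.inl) at hx
        change 0 < pY (z ∘ Sum.inr) at hy
        have hgz := hgpos z
        have hgxz := hgxpos (z ∘ Sum.inl)
        have hgyz := hgypos (z ∘ Sum.inr)
        rw [Real.log_mul hgz.ne' (by positivity), Real.log_div hx.ne' hgxz.ne'] at e1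
        rw [Real.log_mul hgz.ne' (by positivity), Real.log_div hy.ne' hgyz.ne'] at e2
        change _ ≤ (p z * Real.log (p z / gaussianPdf m S z) +
          p z * Real.log (p z / (pX (z ∘ Sum.inl) * pY (z ∘ Sum.inr)))) - _
        rw [Real.log_div h0.ne' hgz.ne', Real.log_div h0.ne' (by positivity),
          Real.log_mul hx.ne' hy.ne']
        simp only [Pi.sub_apply]
        linarith)
  have hcard : (Fintype.card (Fin dx ⊕ Fin dy) : ℝ) =
      Fintype.card (Fin dx) + Fintype.card (Fin dy) := by
    rw [Fintype.card_sum, Nat.cast_add]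
  rw [hcard] at hg
  rw [integral_sub' ((hpi.const_mul 2).sub ia1) ib1, integral_sub' (hpi.const_mul 2) ia1,
    integral_add' (h_int_KL.sub h_int_I) ((ig.sub igx).sub igy), integral_sub' h_int_KL h_int_I,
    integral_sub' (ig.sub igx) igy, integral_sub' ig igx, hg, hgx, hgy, integral_const_mul,
    hp_int] at hupper
  rw [integral_sub' ((hpi.const_mul 2).sub ia2) ib2, integral_sub' (hpi.const_mul 2) ia2,
    integral_sub' (h_int_KL.add h_int_I) ((ig.sub igx).sub igy), integral_add' h_int_KL h_int_I,
    integral_sub' (ig.sub igx) igy, integral_sub' ig igx, hg, hgx, hgy, integral_const_mul,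
    hp_int] at hlower
  rw [abs_le]
  constructor <;> linarith
end
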